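/- (Southwest Corollary) Let G be a finite simple graph on n vertices and suppose there is no matrix A ∈ S(G) with exactly p positive eigenvalues and exactly q negative eigenvalues, where p + q < n. Then for all integers s, t with 0 ≤ s ≤ p and 0 ≤ t ≤ q, there is no matrix A ∈ S(G) with exactly s positive eigenvalues and exactly t negative eigenvalues. -/

import Mathlib

/-- The number of positive eigenvalues (with multiplicity) of a Hermitian matrix. -/
noncomputable def posEigCount {n : Type*} [Fintype n] [DecidableEq n]
    {A : Matrix n n ℂ} (hA : A.IsHermitian) : ℕ :=
  Fintype.card {i // 0 < hA.eigenvalues i}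

/-- The number of negative eigenvalues (with multiplicity) of a Hermitian matrix. -/
noncomputable def negEigCount {n : Type*} [Fintype n] [DecidableEq n]
    {A : Matrix n n ℂ} (hA : A.IsHermitian) : ℕ :=
  Fintype.card {i // hA.eigenvalues i < 0}

/-!
If a Hermitian matrix `A` is singular, pick `v ≠ 0` in its kernel and `k` with `v k ≠ 0`, and add
`1` to the `k`-th diagonal entry. The quadratic form increases, so the negative index cannot grow;
it is unchanged on the hyperplane `x k = 0`, so the positive index grows by at most one. The rank
does grow, because the kernel becomes its intersection with that hyperplane, which misses `v`.
Hence the inertia moves exactly from `(p, q)` to `(p + 1, q)`. Applied to `-A`, the same move gives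
`(p, q + 1)`, and iterating the two moves reaches every inertia north-east of `(p, q)` without
touching the off-diagonal entries. The comparison of indices is the dimension count behind
Sylvester's law of inertia, relaxed by finitely many linear conditions.
-/

open Matrix Module

section DiagonalForm

variable {𝕜 E F ι κ : Type*} [NormedDivisionRing 𝕜] [AddCommGroup E] [Module 𝕜 E]
  [AddCommGroup F] [Module 𝕜 F] [FiniteDimensional 𝕜 F] [Fintype ι] [Fintype κ]

theorem card_pos_weights_le_add_finrank (φ : E ≃ₗ[𝕜] ι → 𝕜) (ψ : E →ₗ[𝕜] κ → 𝕜) (ℓ : E →ₗ[𝕜] F)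
    {w : ι → ℝ} {u : κ → ℝ}
    (h : ∀ x, ℓ x = 0 → ∑ i, w i * ‖φ x i‖ ^ 2 ≤ ∑ j, u j * ‖ψ x j‖ ^ 2) :
    Fintype.card {i // 0 < w i} ≤ Fintype.card {j // 0 < u j} + finrank 𝕜 F := by
  let extend : ({i // 0 < w i} → 𝕜) →ₗ[𝕜] ι → 𝕜 :=
    Function.ExtendByZero.linearMap 𝕜 Subtype.val
  let restrict : (κ → 𝕜) →ₗ[𝕜] {j // 0 < u j} → 𝕜 := LinearMap.funLeft 𝕜 𝕜 Subtype.val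
  -- A vector supported on the positive weights of the smaller form and killed by `ℓ` and by the
  -- coordinates of positive weight in the larger form has smaller value `≥ 0`, larger value `≤ 0`.
  let T := ((restrict ∘ₗ ψ).prod ℓ) ∘ₗ φ.symm.toLinearMap ∘ₗ extend
  suffices hT : Function.Injective T by
    simpa using LinearMap.finrank_le_finrank_of_injective hT
  refine (injective_iff_map_eq_zero T).2 fun y hy => ?_
  obtain ⟨hψ, hℓ⟩ := Prod.ext_iff.1 hy
  have hlarger : ∑ j, u j * ‖ψ (φ.symm (extend y)) j‖ ^ 2 ≤ 0 := by
    refine Finset.sum_nonpos fun j _ => ?_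
    by_cases hj : 0 < u j
    · have : ψ (φ.symm (extend y)) j = 0 := congrFun hψ ⟨j, hj⟩
      simp [this]
    · exact mul_nonpos_of_nonpos_of_nonneg (not_lt.1 hj) (by positivity)
  have hterm : ∀ i, 0 ≤ w i * ‖extend y i‖ ^ 2 := fun i => by
    by_cases hi : 0 < w i
    · positivity
    · have : extend y i = 0 := Function.extend_apply' _ _ _ fun ⟨j, hj⟩ => hi (hj ▸ j.2)
      simp [this]
  have hsmaller : ∑ i, w i * ‖extend y i‖ ^ 2 ≤ 0 := by
    simpa using (h _ hℓ).trans hlarger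
  have hzero := (Finset.sum_eq_zero_iff_of_nonneg fun i _ => hterm i).1
    (hsmaller.antisymm (Finset.sum_nonneg fun i _ => hterm i))
  ext i
  have hi : extend y i = 0 := by
    simpa [i.2.ne'] using hzero i (Finset.mem_univ _)
  rwa [← Subtype.val_injective.extend_apply y 0 i]

theorem card_pos_weights_le (φ : E ≃ₗ[𝕜] ι → 𝕜) (ψ : E →ₗ[𝕜] κ → 𝕜) {w : ι → ℝ} {u : κ → ℝ}
    (h : ∀ x, ∑ i, w i * ‖φ x i‖ ^ 2 ≤ ∑ j, u j * ‖ψ x j‖ ^ 2) :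
    Fintype.card {i // 0 < w i} ≤ Fintype.card {j // 0 < u j} := by
  simpa using card_pos_weights_le_add_finrank φ ψ (0 : E →ₗ[𝕜] Fin 0 → 𝕜) fun x _ => h x

theorem card_pos_weights_eq (φ : E ≃ₗ[𝕜] ι → 𝕜) (ψ : E ≃ₗ[𝕜] κ → 𝕜) {w : ι → ℝ} {u : κ → ℝ}
    (h : ∀ x, ∑ i, w i * ‖φ x i‖ ^ 2 = ∑ j, u j * ‖ψ x j‖ ^ 2) :
    Fintype.card {i // 0 < w i} = Fintype.card {j // 0 < u j} :=
  (card_pos_weights_le φ ψ.toLinearMap fun x => (h x).le).antisymm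
    (card_pos_weights_le ψ φ.toLinearMap fun x => (h x).ge)

end DiagonalForm

theorem rank_lt_rank_add_single {m n K : Type*} [Fintype m] [Fintype n] [DecidableEq m]
    [DecidableEq n] [Field K] {A : Matrix m n K} {u : m → K} {v : n → K} {i : m} {j : n} {c : K}
    (hu : u ᵥ* A = 0) (hv : A *ᵥ v = 0) (hui : u i ≠ 0) (hvj : v j ≠ 0) (hc : c ≠ 0) :
    A.rank < (A + single i j c).rank := by
  have hmul (x : n → K) : (A + single i j c) *ᵥ x = A *ᵥ x + Pi.single i (c * x j) := by
    rw [add_mulVec, single_mulVec]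
    rfl
  have hker {x : n → K} (hx : (A + single i j c) *ᵥ x = 0) : A *ᵥ x = 0 ∧ x j = 0 := by
    rw [hmul] at hx
    have hxj : x j = 0 := by
      have := congrArg (u ⬝ᵥ ·) hx
      simpa [dotProduct_add, dotProduct_mulVec, hu, hui, hc] using this
    simpa [hxj] using hx
  have hlt : LinearMap.ker (A + single i j c).mulVecLin < LinearMap.ker A.mulVecLin :=
    SetLike.lt_iff_le_and_exists.2 ⟨fun x hx => (hker hx).1, v, hv, fun h => hvj (hker h).2⟩
  have hfinrank := Submodule.finrank_lt_finrank_of_lt hlt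
  have hA := A.mulVecLin.finrank_range_add_finrank_ker
  have hB := (A + single i j c).mulVecLin.finrank_range_add_finrank_ker
  simp only [rank]
  omega

section Inertia

variable {𝕜 n : Type*} [RCLike 𝕜] [Fintype n] [DecidableEq n] {A B : Matrix n n 𝕜}

/-- The positive index of inertia of a real symmetric or complex Hermitian matrix: its number of
positive eigenvalues, with multiplicity. Over `ℂ` this is `posEigCount`. -/
noncomputable def posIndex (hA : A.IsHermitian) : ℕ :=
  Fintype.card {i // 0 < hA.eigenvalues i}

/-- The negative index of inertia of a real symmetric or complex Hermitian matrix: its number of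
negative eigenvalues, with multiplicity. Over `ℂ` this is `negEigCount`. -/
noncomputable def negIndex (hA : A.IsHermitian) : ℕ :=
  Fintype.card {i // hA.eigenvalues i < 0}

theorem rank_eq_posIndex_add_negIndex (hA : A.IsHermitian) :
    A.rank = posIndex hA + negIndex hA := by
  have hdisj : Disjoint (fun i => 0 < hA.eigenvalues i) fun i => hA.eigenvalues i < 0 :=
    Pi.disjoint_iff.2 fun i => Prop.disjoint_iff.2 fun h => h.1.not_gt h.2
  rw [hA.rank_eq_card_non_zero_eigs, posIndex, negIndex,
    ← Fintype.card_subtype_or_disjoint _ _ hdisj]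
  exact Fintype.card_congr (Equiv.subtypeEquivRight fun i => ne_iff_gt_or_lt)

/-- The coordinates of a vector in the orthonormal eigenbasis of a Hermitian matrix. -/
noncomputable def eigenCoord (hA : A.IsHermitian) : (n → 𝕜) ≃ₗ[𝕜] n → 𝕜 :=
  UnitaryGroup.toLinearEquiv (star hA.eigenvectorUnitary)

theorem re_star_dotProduct_mulVec_eq_sum (hA : A.IsHermitian) (x : n → 𝕜) :
    RCLike.re (star x ⬝ᵥ A *ᵥ x) = ∑ i, hA.eigenvalues i * ‖eigenCoord hA x i‖ ^ 2 := by
  let U : Matrix n n 𝕜 := ↑hA.eigenvectorUnitary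
  have hcoord : eigenCoord hA x = star U *ᵥ x := rfl
  have hstar : star x ᵥ* U = star (eigenCoord hA x) := by
    rw [hcoord, star_mulVec, star_eq_conjTranspose, conjTranspose_conjTranspose]
  conv_lhs => rw [hA.spectral_theorem, Unitary.conjStarAlgAut_apply, ← mulVec_mulVec,
    ← mulVec_mulVec, dotProduct_mulVec, hstar, ← hcoord, dotProduct, map_sum]
  refine Finset.sum_congr rfl fun i _ => ?_
  rw [mulVec_diagonal, Function.comp_apply, mul_left_comm, RCLike.re_ofReal_mul, Pi.star_apply,
    RCLike.star_def, RCLike.conj_mul, ← RCLike.ofReal_pow, RCLike.ofReal_re]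

theorem posIndex_le_add_finrank {F : Type*} [AddCommGroup F] [Module 𝕜 F] [FiniteDimensional 𝕜 F]
    (hA : A.IsHermitian) (hB : B.IsHermitian) (ℓ : (n → 𝕜) →ₗ[𝕜] F)
    (h : ∀ x, ℓ x = 0 → RCLike.re (star x ⬝ᵥ A *ᵥ x) ≤ RCLike.re (star x ⬝ᵥ B *ᵥ x)) :
    posIndex hA ≤ posIndex hB + finrank 𝕜 F :=
  card_pos_weights_le_add_finrank (eigenCoord hA) (eigenCoord hB).toLinearMap ℓ fun x hx => by
    simpa [re_star_dotProduct_mulVec_eq_sum hA, re_star_dotProduct_mulVec_eq_sum hB] using h x hx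

theorem posIndex_neg (hA : A.IsHermitian) : posIndex hA.neg = negIndex hA := by
  have hform (x : n → 𝕜) : ∑ i, hA.neg.eigenvalues i * ‖eigenCoord hA.neg x i‖ ^ 2 =
      ∑ i, -hA.eigenvalues i * ‖eigenCoord hA x i‖ ^ 2 := by
    simp [← re_star_dotProduct_mulVec_eq_sum, neg_mulVec]
  simpa [posIndex, negIndex] using card_pos_weights_eq _ _ hform

theorem negIndex_neg (hA : A.IsHermitian) : negIndex hA.neg = posIndex hA := by
  simp only [← posIndex_neg, neg_neg]

theorem negIndex_le_of_forall_re_le (hA : A.IsHermitian) (hB : B.IsHermitian)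
    (h : ∀ x, RCLike.re (star x ⬝ᵥ B *ᵥ x) ≤ RCLike.re (star x ⬝ᵥ A *ᵥ x)) :
    negIndex hA ≤ negIndex hB := by
  have hform (x : n → 𝕜) : ∑ i, -hA.eigenvalues i * ‖eigenCoord hA x i‖ ^ 2 ≤
      ∑ i, -hB.eigenvalues i * ‖eigenCoord hB x i‖ ^ 2 := by
    simpa [← re_star_dotProduct_mulVec_eq_sum] using h x
  simpa [negIndex] using card_pos_weights_le (eigenCoord hA) (eigenCoord hB).toLinearMap hform

theorem exists_offDiag_eq_posIndex_eq_add_one (hA : A.IsHermitian)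
    (hlt : posIndex hA + negIndex hA < Fintype.card n) :
    ∃ B : Matrix n n 𝕜, ∃ hB : B.IsHermitian, (∀ i j, i ≠ j → B i j = A i j) ∧
      posIndex hB = posIndex hA + 1 ∧ negIndex hB = negIndex hA := by
  rw [← rank_eq_posIndex_add_negIndex] at hlt
  obtain ⟨v, hv0, hv⟩ : ∃ v, v ≠ 0 ∧ A *ᵥ v = 0 :=
    exists_mulVec_eq_zero_iff.2 <| by
      contrapose! hlt
      exact (rank_of_det_ne_zero hlt).ge
  obtain ⟨k, hk⟩ := Function.ne_iff.1 hv0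
  have hB : (A + single k k 1).IsHermitian := hA.add (by simp [IsHermitian])
  have hform (x : n → 𝕜) : RCLike.re (star x ⬝ᵥ (A + single k k 1) *ᵥ x) =
      RCLike.re (star x ⬝ᵥ A *ᵥ x) + ‖x k‖ ^ 2 := by
    simp [add_mulVec, single_mulVec_eq, RCLike.norm_sq_eq_def]
  have hpos : posIndex hB ≤ posIndex hA + 1 := by
    simpa using posIndex_le_add_finrank hB hA (LinearMap.proj k) fun x (hx : x k = 0) => by
      simp [hform, hx]
  have hneg : negIndex hB ≤ negIndex hA :=
    negIndex_le_of_forall_re_le hB hA fun x => by simp [hform]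
  have hrank : A.rank < (A + single k k (1 : 𝕜)).rank := by
    have hv' : star v ᵥ* A = 0 := by rw [← hA.eq, ← star_mulVec, hv, star_zero]
    exact rank_lt_rank_add_single hv' hv (star_ne_zero.2 hk) hk one_ne_zero
  rw [rank_eq_posIndex_add_negIndex hA, rank_eq_posIndex_add_negIndex hB] at hrank
  refine ⟨_, hB, fun i j hij => ?_, by omega, by omega⟩
  rw [Matrix.add_apply, single_apply_of_ne _ _ _ _ _ fun h => hij (h.1.symm.trans h.2),
    add_zero]

theorem exists_offDiag_eq_posIndex_eq (hA : A.IsHermitian) {p : ℕ} (hp : posIndex hA ≤ p)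
    (hcard : p + negIndex hA ≤ Fintype.card n) :
    ∃ B : Matrix n n 𝕜, ∃ hB : B.IsHermitian, (∀ i j, i ≠ j → B i j = A i j) ∧
      posIndex hB = p ∧ negIndex hB = negIndex hA := by
  induction p, hp using Nat.le_induction with
  | base => exact ⟨A, hA, fun _ _ _ => rfl, rfl, rfl⟩
  | succ p _ ih =>
    obtain ⟨B, hB, hBA, rfl, hneg⟩ := ih (by omega)
    obtain ⟨C, hC, hCB, hpos, hneg'⟩ := exists_offDiag_eq_posIndex_eq_add_one hB (by omega)
    exact ⟨C, hC, fun i j hij => (hCB i j hij).trans (hBA i j hij), hpos, hneg'.trans hneg⟩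

theorem exists_offDiag_eq_negIndex_eq (hA : A.IsHermitian) {q : ℕ} (hq : negIndex hA ≤ q)
    (hcard : posIndex hA + q ≤ Fintype.card n) :
    ∃ B : Matrix n n 𝕜, ∃ hB : B.IsHermitian, (∀ i j, i ≠ j → B i j = A i j) ∧
      posIndex hB = posIndex hA ∧ negIndex hB = q := by
  rw [← posIndex_neg] at hq
  rw [← negIndex_neg, add_comm] at hcard
  obtain ⟨B, hB, hBA, hpos, hneg⟩ := exists_offDiag_eq_posIndex_eq hA.neg hq hcard
  refine ⟨-B, hB.neg, fun i j hij => ?_, ?_, ?_⟩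
  · rw [neg_apply, hBA i j hij, neg_apply, neg_neg]
  · rw [posIndex_neg hB, hneg, negIndex_neg]
  · rw [negIndex_neg hB, hpos]

theorem exists_offDiag_eq_posIndex_eq_negIndex_eq (hA : A.IsHermitian) {p q : ℕ}
    (hp : posIndex hA ≤ p) (hq : negIndex hA ≤ q) (hpq : p + q ≤ Fintype.card n) :
    ∃ B : Matrix n n 𝕜, ∃ hB : B.IsHermitian, (∀ i j, i ≠ j → B i j = A i j) ∧
      posIndex hB = p ∧ negIndex hB = q := by
  obtain ⟨B, hB, hBA, rfl, hneg⟩ := exists_offDiag_eq_posIndex_eq hA hp (by omega)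
  obtain ⟨C, hC, hCB, hpos, rfl⟩ := exists_offDiag_eq_negIndex_eq hB (hneg.trans_le hq) hpq
  exact ⟨C, hC, fun i j hij => (hCB i j hij).trans (hBA i j hij), hpos, rfl⟩

end Inertia

section Graph

variable {V : Type*} [Fintype V] [DecidableEq V]

/-- The inertia set of a graph over `𝕜 = ℝ` or `ℂ`: the inertias `(p, q)` of the Hermitian matrices
whose nonzero off-diagonal entries sit exactly at the edges. -/
def inertiaSet (𝕜 : Type*) [RCLike 𝕜] (G : SimpleGraph V) : Set (ℕ × ℕ) :=
  {x | ∃ A : Matrix V V 𝕜, ∃ hA : A.IsHermitian,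
    (∀ i j : V, i ≠ j → (A i j ≠ 0 ↔ G.Adj i j)) ∧ posIndex hA = x.1 ∧ negIndex hA = x.2}

theorem southwest_corollary_general {𝕜 : Type*} [RCLike 𝕜] {G : SimpleGraph V} {p q s t : ℕ}
    (hpq : p + q ≤ Fintype.card V) (hnotin : (p, q) ∉ inertiaSet 𝕜 G) (hs : s ≤ p) (ht : t ≤ q) :
    (s, t) ∉ inertiaSet 𝕜 G := by
  rintro ⟨A, hA, hG, rfl, rfl⟩
  obtain ⟨B, hB, hBA, hp, hq⟩ := exists_offDiag_eq_posIndex_eq_negIndex_eq hA hs ht hpq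
  exact hnotin ⟨B, hB, fun i j hij => hBA i j hij ▸ hG i j hij, hp, hq⟩

end Graph

/-- Southwest Corollary: if `(p, q)` with `p + q < n` is not in the inertia set of
`G`, then neither is `(s, t)` for any `0 ≤ s ≤ p` and `0 ≤ t ≤ q`. -/
theorem southwest_corollary
    {V : Type*} [Fintype V] [DecidableEq V] (G : SimpleGraph V)
    (p q : ℕ) (hpq : p + q < Fintype.card V)
    (hnotin : ¬ ∃ A : Matrix V V ℂ, ∃ hA : A.IsHermitian,
      (∀ i j : V, i ≠ j → (A i j ≠ 0 ↔ G.Adj i j)) ∧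
      posEigCount hA = p ∧ negEigCount hA = q)
    (s t : ℕ) (hs : s ≤ p) (ht : t ≤ q) :
    ¬ ∃ A : Matrix V V ℂ, ∃ hA : A.IsHermitian,
      (∀ i j : V, i ≠ j → (A i j ≠ 0 ↔ G.Adj i j)) ∧
      posEigCount hA = s ∧ negEigCount hA = t :=
  southwest_corollary_general (𝕜 := ℂ) hpq.le hnotin hs ht
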